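/- Let N ≥ 1 and d ≥ 2 be integers, let V ⊆ ℝ^N be the common zero set of a finite family of real polynomials in N variables of total degree at most d, and let c > 0. Then for every affine subspace L ⊆ ℝ^N, the set V ∩ {x ∈ ℝ^N : ‖x‖ ≤ c} ∩ L, equipped with the subspace topology, has at most (2d)^{N+1} connected components. -/

import Mathlib

/-!
Adjoining one variable `t` with `t² + ‖x‖² = c²` turns the part of the variety in the ball and in
the affine subspace into a continuous image of the zero set `Z` of a single nonnegative polynomial
`F`, a sum of squares of degree at most `2d` in `N + 1` variables; `Z` lies on a sphere, so it is
compact. Given finitely many components of `Z`, separate them by disjoint open sets `V` for which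
`Z ∩ V` is compact and nonempty. For small `ε ≠ 0` the polynomial `F + ε ∑ xᵢ ^ (D + 1)`, where
`D = 2d`, has a local minimum in each `V`. There the gradient vanishes, which reads
`xᵢ ^ D = rᵢ(x)` with `deg rᵢ < D`. On the set of points so obtained, every polynomial function is
therefore a combination of the `D ^ (N + 1)` monomials with all exponents below `D`; since
polynomials interpolate arbitrary values on finitely many points, there are at most `D ^ (N + 1)`
points, hence at most that many components.
-/

open MvPolynomial Filter Topology Metric
open scoped Function

section BezoutBound

theorem aeval_mem_span_monomials_of_pow_eq {σ R A : Type*} [Fintype σ] [CommSemiring R]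
    [CommSemiring A] [Algebra R A] {x : σ → A} {D : ℕ} {r : σ → MvPolynomial σ R}
    (hr : ∀ i, (r i).totalDegree < D) (hx : ∀ i, x i ^ D = aeval x (r i)) (q : MvPolynomial σ R) :
    aeval x q ∈ Submodule.span R (Set.range fun m : σ → Fin D => ∏ i, x i ^ (m i : ℕ)) := by
  induction hn : q.totalDegree using Nat.strong_induction_on generalizing q with | _ n ih
  rw [q.as_sum, map_sum]
  refine Submodule.sum_mem _ fun s hs => ?_
  rw [← mul_one (q.coeff s), ← smul_eq_mul, ← smul_monomial, map_smul]
  refine Submodule.smul_mem _ _ ?_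
  by_cases hsD : ∀ i, s i < D
  · refine Submodule.subset_span ⟨fun i => ⟨s i, hsD i⟩, ?_⟩
    simp [aeval_monomial, Finsupp.prod_fintype]
  push Not at hsD
  obtain ⟨i, hi⟩ := hsD
  obtain ⟨t, rfl⟩ := exists_add_of_le (Finsupp.single_le_iff.2 hi)
  have hreduce : aeval x (monomial (Finsupp.single i D + t) (1 : R)) =
      aeval x (r i * monomial t 1) := by
    rw [map_mul, ← hx, ← one_mul (1 : R), ← monomial_mul, map_mul, ← X_pow_eq_monomial, map_pow,
      aeval_X, one_mul]
  have hdeg : (r i * monomial t 1).totalDegree < n := by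
    calc (r i * monomial t 1).totalDegree
        ≤ (r i).totalDegree + (monomial t (1 : R)).totalDegree := totalDegree_mul _ _
      _ < D + t.degree := add_lt_add_of_lt_of_le (hr i) (totalDegree_monomial_le t 1)
      _ = (Finsupp.single i D + t).degree := by rw [map_add, Finsupp.degree_single]
      _ ≤ n := (le_totalDegree hs).trans_eq hn
  rw [hreduce]
  exact ih _ hdeg _ rfl

theorem finrank_le_pow_of_aeval_surjective {σ R A : Type*} [Fintype σ] [CommRing R] [Nontrivial R]
    [CommRing A] [Algebra R A] {x : σ → A} {D : ℕ} {r : σ → MvPolynomial σ R}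
    (hsurj : Function.Surjective (aeval x : MvPolynomial σ R →ₐ[R] A))
    (hr : ∀ i, (r i).totalDegree < D) (hx : ∀ i, x i ^ D = aeval x (r i)) :
    Module.finrank R A ≤ D ^ Fintype.card σ := by
  have hspan : Submodule.span R (Set.range fun m : σ → Fin D => ∏ i, x i ^ (m i : ℕ)) = ⊤ :=
    eq_top_iff.2 fun a _ => by
      obtain ⟨q, rfl⟩ := hsurj a
      exact aeval_mem_span_monomials_of_pow_eq hr hx q
  classical
  calc Module.finrank R A
      ≤ Fintype.card (σ → Fin D) := finrank_le_of_span_eq_top hspan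
    _ = D ^ Fintype.card σ := by simp

theorem aeval_pi_apply {σ ι R : Type*} [CommSemiring R] (p : ι → σ → R) (q : MvPolynomial σ R)
    (a : ι) : aeval (fun i a => p a i) q a = eval (p a) q :=
  comp_aeval_apply _ (Pi.evalAlgHom R (fun _ : ι => R) a) q

theorem exists_eval_eq_one_eval_eq_zero {σ K : Type*} [Field K] {x y : σ → K} (hxy : x ≠ y) :
    ∃ q : MvPolynomial σ K, eval x q = 1 ∧ eval y q = 0 := by
  obtain ⟨i, hi⟩ := Function.ne_iff.1 hxy
  exact ⟨C (x i - y i)⁻¹ * (X i - C (y i)), by simp [sub_ne_zero.2 hi], by simp⟩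

theorem exists_eval_eq_of_injective {σ ι K : Type*} [Field K] [Finite ι] {p : ι → σ → K}
    (hp : Function.Injective p) (w : ι → K) : ∃ q : MvPolynomial σ K, ∀ a, eval (p a) q = w a := by
  classical
  have := Fintype.ofFinite ι
  choose! q hq_one hq_zero using fun a b (hab : a ≠ b) =>
    exists_eval_eq_one_eval_eq_zero (hp.ne hab)
  refine ⟨∑ a, C (w a) * ∏ b ∈ Finset.univ.erase a, q a b, fun c => ?_⟩
  simp only [map_sum, map_mul, eval_C, map_prod]
  rw [Finset.sum_eq_single c, Finset.prod_eq_one, mul_one]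
  · exact fun b hb => hq_one c b (Finset.ne_of_mem_erase hb).symm
  · intro a _ hac
    rw [Finset.prod_eq_zero (Finset.mem_erase.2 ⟨hac.symm, Finset.mem_univ c⟩) (hq_zero a c hac),
      mul_zero]
  · simp

theorem card_le_pow_of_pow_eq_eval {σ ι K : Type*} [Fintype σ] [Fintype ι] [Field K]
    {p : ι → σ → K} (hp : Function.Injective p) {D : ℕ} {r : σ → MvPolynomial σ K}
    (hr : ∀ i, (r i).totalDegree < D) (h : ∀ a i, p a i ^ D = eval (p a) (r i)) :
    Fintype.card ι ≤ D ^ Fintype.card σ := by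
  have hsurj : Function.Surjective
      (aeval (fun i a => p a i) : MvPolynomial σ K →ₐ[K] ι → K) := by
    intro w
    obtain ⟨q, hq⟩ := exists_eval_eq_of_injective hp w
    exact ⟨q, by ext a; rw [aeval_pi_apply, hq]⟩
  have hpow (i : σ) : (fun a => p a i) ^ D = aeval (fun i a => p a i) (r i) := by
    ext a
    rw [Pi.pow_apply, aeval_pi_apply, h]
  rw [← Module.finrank_fintype_fun_eq_card K (η := ι)]
  exact finrank_le_pow_of_aeval_surjective hsurj hr hpow

end BezoutBound

section CriticalPoints

theorem totalDegree_pderiv_le {σ R : Type*} [CommSemiring R] (i : σ) (f : MvPolynomial σ R) :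
    (pderiv i f).totalDegree ≤ f.totalDegree - 1 := by
  refine Finset.sup_le fun m hm => ?_
  have hmem : m + Finsupp.single i 1 ∈ f.support := by
    rw [mem_support_iff, coeff_pderiv] at hm
    exact mem_support_iff.2 (left_ne_zero_of_mul hm)
  have hle := le_totalDegree hmem
  rw [Finsupp.sum_add_index' (fun _ => rfl) (fun _ _ _ => rfl), Finsupp.sum_single_index rfl] at hle
  exact Nat.le_sub_of_add_le hle

theorem pderiv_psum_succ {σ R : Type*} [Fintype σ] [CommSemiring R] (i : σ) (n : ℕ) :
    pderiv i (psum σ R (n + 1)) = C (n + 1 : R) * X i ^ n := by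
  classical
  simp [psum, pderiv_X, Pi.single_apply]

theorem card_le_pow_of_pderiv_add_psum_eq_zero {σ ι K : Type*} [Fintype σ] [Fintype ι] [Field K]
    [CharZero K] {f : MvPolynomial σ K} {D : ℕ} (hD : D ≠ 0) (hf : f.totalDegree ≤ D) {ε : K}
    (hε : ε ≠ 0) {p : ι → σ → K} (hp : Function.Injective p)
    (hcrit : ∀ a i, eval (p a) (pderiv i (f + C ε * psum σ K (D + 1))) = 0) :
    Fintype.card ι ≤ D ^ Fintype.card σ := by
  have hcoeff : ε * (D + 1) ≠ 0 := mul_ne_zero hε (Nat.cast_add_one_ne_zero D)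
  refine card_le_pow_of_pow_eq_eval hp (r := fun i => C (-(ε * (D + 1))⁻¹) * pderiv i f)
    (fun i => ?_) (fun a i => ?_)
  · calc (C (-(ε * (D + 1))⁻¹) * pderiv i f).totalDegree
        ≤ (pderiv i f).totalDegree := by
          simpa only [totalDegree_C, zero_add] using totalDegree_mul (C (-(ε * (D + 1))⁻¹)) _
      _ ≤ f.totalDegree - 1 := totalDegree_pderiv_le i f
      _ < D := by lia
  · have hgrad : eval (p a) (pderiv i f) + ε * ((D + 1) * p a i ^ D) = 0 := by
      simpa [pderiv_C_mul, pderiv_psum_succ] using hcrit a i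
    rw [map_mul, eval_C, neg_mul, ← mul_neg, eq_inv_mul_iff_mul_eq₀ hcoeff]
    linear_combination hgrad

theorem hasDerivAt_eval_update {σ 𝕜 : Type*} [DecidableEq σ] [NontriviallyNormedField 𝕜]
    (x : σ → 𝕜) (i : σ) (f : MvPolynomial σ 𝕜) :
    HasDerivAt (fun t => eval (Function.update x i t) f) (eval x (pderiv i f)) (x i) := by
  induction f using MvPolynomial.induction_on with
  | C a => simpa using hasDerivAt_const (x i) a
  | add f g hf hg => simpa only [map_add] using hf.fun_add hg
  | mul_X f j hf =>
    have hX : HasDerivAt (fun t => Function.update x i t j) (eval x (pderiv i (X j))) (x i) := by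
      rcases eq_or_ne j i with rfl | hj
      · simpa using hasDerivAt_id' (x j)
      · simpa [hj, pderiv_X_of_ne hj] using hasDerivAt_const (x i) (x j)
    simpa only [map_mul, eval_X, pderiv_mul, map_add, Function.update_eq_self] using hf.fun_mul hX

theorem eval_pderiv_eq_zero_of_isLocalMin {σ : Type*} {f : MvPolynomial σ ℝ} {x : σ → ℝ}
    (h : IsLocalMin (fun y => eval y f) x) (i : σ) : eval x (pderiv i f) = 0 := by
  classical
  have hupdate : Tendsto (Function.update x i) (𝓝 (x i)) (𝓝 x) := by
    simpa using (continuous_const.update i continuous_id : Continuous (Function.update x i)).tendsto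
      (x i)
  have hmin : IsLocalMin (fun t => eval (Function.update x i t) f) (x i) := by
    simpa [IsLocalMin, IsMinFilter] using hupdate.eventually h
  exact hmin.hasDerivAt_eq_zero (hasDerivAt_eval_update x i f)

end CriticalPoints

section ConnectedComponents

theorem finite_and_natCard_le_of_forall_finset_card_le {α : Type*} {n : ℕ}
    (h : ∀ S : Finset α, S.card ≤ n) : Finite α ∧ Nat.card α ≤ n := by
  have := fintypeOfFinsetCardLe n h
  exact ⟨inferInstance, Nat.card_eq_fintype_card (α := α) ▸ h Finset.univ⟩

theorem finite_and_natCard_connectedComponents_image_le {X Y : Type*} [TopologicalSpace X]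
    [TopologicalSpace Y] {g : X → Y} (hg : Continuous g) (s : Set X)
    [Finite (ConnectedComponents s)] :
    Finite (ConnectedComponents (g '' s)) ∧
      Nat.card (ConnectedComponents (g '' s)) ≤ Nat.card (ConnectedComponents s) := by
  have hcont : Continuous (s.imageFactorization g) := (hg.comp continuous_subtype_val).subtype_mk _
  have hsurj : Function.Surjective hcont.connectedComponentsMap :=
    ConnectedComponents.surjective_coe.forall.2 fun y =>
      let ⟨x, hx⟩ := Set.imageFactorization_surjective y
      ⟨x, congrArg ConnectedComponents.mk hx⟩
  exact ⟨Finite.of_surjective _ hsurj, Nat.card_le_card_of_surjective _ hsurj⟩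

theorem exists_pairwise_disjoint_isClopen_mem {X : Type*} [TopologicalSpace X] [CompactSpace X]
    [T2Space X] [TotallyDisconnectedSpace X] (S : Finset X) :
    ∃ U : S → Set X, (∀ a, IsClopen (U a)) ∧ (∀ a : S, ↑a ∈ U a) ∧ Pairwise (Disjoint on U) := by
  obtain ⟨V, hV, hdisj⟩ := S.finite_toSet.t2_separation
  choose U hU hmem hUV using fun x => compact_exists_isClopen_in_isOpen (hV x).2 (hV x).1
  exact ⟨fun a => U a, fun a => hU a, fun a => hmem a, fun a b hab =>
    (hdisj a.2 b.2 (Subtype.coe_ne_coe.2 hab)).mono (hUV a) (hUV b)⟩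

theorem exists_pairwise_disjoint_isOpen_superset {ι X : Type*} [Finite ι] [TopologicalSpace X]
    [T2Space X] {K : ι → Set X} (hK : ∀ a, IsCompact (K a)) (hdisj : Pairwise (Disjoint on K)) :
    ∃ W : ι → Set X, (∀ a, IsOpen (W a)) ∧ (∀ a, K a ⊆ W a) ∧ Pairwise (Disjoint on W) := by
  have hnhds : Pairwise (Disjoint on fun a => 𝓝ˢ (K a)) := fun a b hab =>
    (SeparatedNhds.of_isCompact_isCompact (hK a) (hK b) (hdisj hab)).disjoint_nhdsSet
  obtain ⟨W, hW, hWdisj⟩ :=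
    hnhds.exists_mem_filter_basis_of_disjoint fun a => hasBasis_nhdsSet (K a)
  exact ⟨W, fun a => (hW a).1, fun a => (hW a).2, hWdisj⟩

theorem exists_pairwise_disjoint_isOpen_isCompact_inter {X : Type*} [TopologicalSpace X]
    [T2Space X] {Z : Set X} (hZ : IsCompact Z) (S : Finset (ConnectedComponents Z)) :
    ∃ V : S → Set X, (∀ a, IsOpen (V a)) ∧ (∀ a, IsCompact (Z ∩ V a)) ∧
      (∀ a, (Z ∩ V a).Nonempty) ∧ Pairwise (Disjoint on V) := by
  have := isCompact_iff_compactSpace.1 hZ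
  obtain ⟨U, hU, hUmem, hUdisj⟩ := exists_pairwise_disjoint_isClopen_mem S
  have hclopen (a : S) : IsClopen (ConnectedComponents.mk ⁻¹' U a) :=
    (hU a).preimage ConnectedComponents.continuous_coe
  have hcompact (a : S) : IsCompact (((↑) : Z → X) '' (ConnectedComponents.mk ⁻¹' U a)) :=
    (hclopen a).isClosed.isCompact.image continuous_subtype_val
  choose O hO hOU using fun a => isOpen_induced_iff.1 (hclopen a).isOpen
  have hpiece (a : S) : Z ∩ O a = ((↑) : Z → X) '' (ConnectedComponents.mk ⁻¹' U a) := by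
    rw [← hOU, Subtype.image_preimage_coe]
  obtain ⟨W, hW, hsub, hWdisj⟩ := exists_pairwise_disjoint_isOpen_superset hcompact
    fun a b hab => Set.disjoint_image_of_injective Subtype.val_injective
      ((hUdisj hab).preimage ConnectedComponents.mk)
  have hinter (a : S) :
      Z ∩ (O a ∩ W a) = ((↑) : Z → X) '' (ConnectedComponents.mk ⁻¹' U a) := by
    rw [← Set.inter_assoc, hpiece, Set.inter_eq_left.2 (hsub a)]
  refine ⟨fun a => O a ∩ W a, fun a => (hO a).inter (hW a), fun a => hinter a ▸ hcompact a,
    fun a => hinter a ▸ ?_, fun a b hab =>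
      (hWdisj hab).mono Set.inter_subset_right Set.inter_subset_right⟩
  obtain ⟨z, hz⟩ := ConnectedComponents.surjective_coe a.1
  exact Set.Nonempty.image _ ⟨z, by rw [Set.mem_preimage, hz]; exact hUmem a⟩

end ConnectedComponents

section Perturbation

theorem eventually_exists_isLocalMin {T X : Type*} [TopologicalSpace T] [TopologicalSpace X]
    [LocallyCompactSpace X] {G : T → X → ℝ} (hG : Continuous (Function.uncurry G)) {t₀ : T}
    {V : Set X} (hV : IsOpen V) (hnonneg : ∀ x ∈ V, 0 ≤ G t₀ x)
    (hcompact : IsCompact ({x | G t₀ x = 0} ∩ V)) (hne : ({x | G t₀ x = 0} ∩ V).Nonempty) :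
    ∀ᶠ t in 𝓝 t₀, ∃ x ∈ V, IsLocalMin (G t) x := by
  obtain ⟨L, hL, hZL, hLV⟩ := exists_compact_between hcompact hV Set.inter_subset_right
  obtain ⟨z, hz⟩ := hne
  have hboundary : ∀ᶠ t in 𝓝 t₀, ∀ x ∈ L \ interior L, G t z < G t x := by
    refine (hL.diff isOpen_interior).eventually_forall_of_forall_eventually fun x hx => ?_
    have hpos : 0 < G t₀ x :=
      (hnonneg x (hLV hx.1)).lt_of_ne' fun h0 => hx.2 (hZL ⟨h0, hLV hx.1⟩)
    have hGz : Continuous fun y : T × X => G y.1 z := by fun_prop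
    exact hGz.continuousAt.eventually_lt hG.continuousAt (hz.1.trans_lt hpos)
  filter_upwards [hboundary] with t ht
  have hGt : Continuous (G t) := by fun_prop
  obtain ⟨x, hx, hmin⟩ := hL.exists_isLocalMin_mem_open interior_subset hGt.continuousOn
    (interior_subset (hZL hz)) ht isOpen_interior
  exact ⟨x, hLV (interior_subset hx), hmin⟩

theorem card_le_pow_of_isCompact_zeroLocus_inter {σ ι : Type*} [Fintype σ] [Fintype ι]
    {f : MvPolynomial σ ℝ} {D : ℕ} (hD : D ≠ 0) (hdeg : f.totalDegree ≤ D)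
    {V : ι → Set (σ → ℝ)} (hnonneg : ∀ a, ∀ x ∈ V a, 0 ≤ eval x f) (hV : ∀ a, IsOpen (V a))
    (hcompact : ∀ a, IsCompact ({x | eval x f = 0} ∩ V a))
    (hne : ∀ a, ({x | eval x f = 0} ∩ V a).Nonempty) (hdisj : Pairwise (Disjoint on V)) :
    Fintype.card ι ≤ D ^ Fintype.card σ := by
  have hcont : Continuous (Function.uncurry fun (ε : ℝ) (x : σ → ℝ) =>
      eval x (f + C ε * psum σ ℝ (D + 1))) := by
    simp only [map_add, map_mul, eval_C]
    exact ((continuous_eval f).comp continuous_snd).add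
      (continuous_fst.mul ((continuous_eval _).comp continuous_snd))
  have hmin (a : ι) : ∀ᶠ ε in 𝓝 (0 : ℝ), ∃ x ∈ V a,
      IsLocalMin (fun y => eval y (f + C ε * psum σ ℝ (D + 1))) x :=
    eventually_exists_isLocalMin hcont (hV a) (by simpa using hnonneg a)
      (by simpa using hcompact a) (by simpa using hne a)
  obtain ⟨ε, hε, hε_ne⟩ := (((eventually_all.2 hmin).filter_mono nhdsWithin_le_nhds).and
    (self_mem_nhdsWithin : {0}ᶜ ∈ 𝓝[≠] (0 : ℝ))).exists
  choose p hpV hpmin using hε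
  have hp : Function.Injective p := fun a b hab => by
    by_contra hne
    exact Set.disjoint_left.1 (hdisj hne) (hpV a) (hab ▸ hpV b)
  exact card_le_pow_of_pderiv_add_psum_eq_zero hD hdeg hε_ne hp fun a =>
    eval_pderiv_eq_zero_of_isLocalMin (hpmin a)

theorem natCard_connectedComponents_zeroLocus_le {σ : Type*} [Fintype σ] {f : MvPolynomial σ ℝ}
    {D : ℕ} (hD : D ≠ 0) (hdeg : f.totalDegree ≤ D) (hnonneg : ∀ x, 0 ≤ eval x f)
    (hcompact : IsCompact {x | eval x f = 0}) :
    Finite (ConnectedComponents {x | eval x f = 0}) ∧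
      Nat.card (ConnectedComponents {x | eval x f = 0}) ≤ D ^ Fintype.card σ := by
  refine finite_and_natCard_le_of_forall_finset_card_le fun S => ?_
  obtain ⟨V, hV, hVcompact, hVne, hVdisj⟩ :=
    exists_pairwise_disjoint_isOpen_isCompact_inter hcompact S
  simpa using card_le_pow_of_isCompact_zeroLocus_inter hD hdeg (fun _ x _ => hnonneg x) hV
    hVcompact hVne hVdisj

end Perturbation

section SphereLift

variable {σ : Type*} [Fintype σ]

/-- The sum-of-squares polynomial in the variables `x` (indexed by `some`) and one extra variable
`t` (the index `none`) whose zeros are the points of the sphere `t² + ‖x‖² = c²` at which all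
polynomials of `S` vanish in `x`. It replaces the inequality `‖x‖ ≤ c` by an equation, at the cost
of one variable. -/
noncomputable def sphereLift (S : Finset (MvPolynomial σ ℝ)) (c : ℝ) :
    MvPolynomial (Option σ) ℝ :=
  ∑ q ∈ S, rename some q ^ 2 + (psum (Option σ) ℝ 2 - C (c ^ 2)) ^ 2

theorem eval_sphereLift (S : Finset (MvPolynomial σ ℝ)) (c : ℝ) (x : Option σ → ℝ) :
    eval x (sphereLift S c) =
      ∑ q ∈ S, eval (x ∘ some) q ^ 2 + (∑ i, x i ^ 2 - c ^ 2) ^ 2 := by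
  simp [sphereLift, psum, eval_rename]

theorem eval_sphereLift_nonneg (S : Finset (MvPolynomial σ ℝ)) (c : ℝ) (x : Option σ → ℝ) :
    0 ≤ eval x (sphereLift S c) := by
  rw [eval_sphereLift]
  positivity

theorem eval_sphereLift_eq_zero_iff {S : Finset (MvPolynomial σ ℝ)} {c : ℝ} {x : Option σ → ℝ} :
    eval x (sphereLift S c) = 0 ↔ (∀ q ∈ S, eval (x ∘ some) q = 0) ∧ ∑ i, x i ^ 2 = c ^ 2 := by
  rw [eval_sphereLift, add_eq_zero_iff_of_nonneg (by positivity) (by positivity),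
    Finset.sum_eq_zero_iff_of_nonneg fun _ _ => by positivity]
  simp only [sq_eq_zero_iff, sub_eq_zero]

theorem totalDegree_sphereLift_le {S : Finset (MvPolynomial σ ℝ)} {d : ℕ} (hd : 2 ≤ d)
    (hS : ∀ q ∈ S, q.totalDegree ≤ d) (c : ℝ) : (sphereLift S c).totalDegree ≤ 2 * d := by
  have hsq {q : MvPolynomial (Option σ) ℝ} (hq : q.totalDegree ≤ d) :
      (q ^ 2).totalDegree ≤ 2 * d :=
    (totalDegree_pow q 2).trans (Nat.mul_le_mul_left 2 hq)
  have hpsum : (psum (Option σ) ℝ 2).totalDegree ≤ 2 :=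
    totalDegree_finsetSum_le fun i _ => (totalDegree_X_pow i 2).le
  refine (totalDegree_add _ _).trans (max_le (totalDegree_finsetSum_le fun q hq => ?_) ?_)
  · exact hsq ((totalDegree_rename_le some q).trans (hS q hq))
  · exact hsq ((totalDegree_sub_C_le _ _).trans (hpsum.trans hd))

theorem isCompact_zeroLocus_sphereLift (S : Finset (MvPolynomial σ ℝ)) (c : ℝ) :
    IsCompact {x | eval x (sphereLift S c) = 0} := by
  refine (isCompact_closedBall (0 : Option σ → ℝ) |c|).of_isClosed_subset
    (isClosed_eq (continuous_eval _) continuous_const) fun x hx => ?_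
  rw [mem_closedBall_zero_iff, pi_norm_le_iff_of_nonneg (abs_nonneg c)]
  intro i
  rw [Real.norm_eq_abs, ← sq_le_sq, ← (eval_sphereLift_eq_zero_iff.1 hx).2]
  exact Finset.single_le_sum (f := fun i => x i ^ 2) (fun _ _ => sq_nonneg _) (Finset.mem_univ i)

theorem image_zeroLocus_sphereLift (S : Finset (MvPolynomial σ ℝ)) {c : ℝ} (hc : 0 ≤ c) :
    (fun x : Option σ → ℝ => WithLp.toLp 2 (x ∘ some)) '' {x | eval x (sphereLift S c) = 0} =
      {x : EuclideanSpace ℝ σ | ∀ q ∈ S, eval x q = 0} ∩ closedBall 0 c := by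
  have hnorm (y : EuclideanSpace ℝ σ) : ‖y‖ ^ 2 = ∑ i, y i ^ 2 := by
    simp [EuclideanSpace.norm_sq_eq]
  ext y
  rw [Set.mem_inter_iff, mem_closedBall_zero_iff, ← pow_le_pow_iff_left₀ (norm_nonneg y) hc
    two_ne_zero, hnorm]
  constructor
  · rintro ⟨x, hx, rfl⟩
    obtain ⟨hS, hsphere⟩ := eval_sphereLift_eq_zero_iff.1 hx
    rw [Fintype.sum_option] at hsphere
    exact ⟨hS, hsphere ▸ le_add_of_nonneg_left (sq_nonneg _)⟩
  · rintro ⟨hS, hball⟩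
    refine ⟨fun o => o.elim √(c ^ 2 - ∑ i, y i ^ 2) y, eval_sphereLift_eq_zero_iff.2 ⟨hS, ?_⟩, rfl⟩
    rw [Fintype.sum_option]
    simp only [Option.elim]
    rw [Real.sq_sqrt (sub_nonneg.2 hball), sub_add_cancel]

end SphereLift

section Varieties

theorem exists_finset_forall_eval_eq_zero_iff {σ R : Type*} [Finite σ] [CommRing R]
    [IsNoetherianRing R] (S : Set (MvPolynomial σ R)) :
    ∃ T : Finset (MvPolynomial σ R), ↑T ⊆ S ∧
      ∀ x, (∀ q ∈ T, eval x q = 0) ↔ ∀ q ∈ S, eval x q = 0 := by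
  obtain ⟨T, hTS, hspan⟩ := (Submodule.fg_span_iff_fg_span_finset_subset S).1
    (IsNoetherian.noetherian (Ideal.span S))
  refine ⟨T, hTS, fun x => ⟨fun hT q hq => ?_, fun hS q hq => hS q (hTS hq)⟩⟩
  have hker : Ideal.span (T : Set (MvPolynomial σ R)) ≤ RingHom.ker (eval x) := Ideal.span_le.2 hT
  exact hker (hspan.le (Submodule.subset_span hq))

theorem exists_totalDegree_le_one_eval_eq {σ R : Type*} [Finite σ] [CommRing R]
    (φ : (σ → R) →ₗ[R] R) :
    ∃ q : MvPolynomial σ R, q.totalDegree ≤ 1 ∧ ∀ x, eval x q = φ x := by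
  classical
  have := Fintype.ofFinite σ
  refine ⟨∑ i, monomial (Finsupp.single i 1) (φ fun j => if i = j then 1 else 0),
    totalDegree_finsetSum_le fun i _ => ?_, fun x => ?_⟩
  · simpa using totalDegree_monomial_le (Finsupp.single i 1) (φ fun j => if i = j then 1 else 0)
  · rw [LinearMap.pi_apply_eq_sum_univ φ x]
    simp [eval_monomial, mul_comm]

theorem exists_totalDegree_le_one_eval_ne_zero_of_notMem {σ K : Type*} [Finite σ] [Field K]
    {L : AffineSubspace K (σ → K)} {x : σ → K} (hx : x ∉ L) :
    ∃ q : MvPolynomial σ K, q.totalDegree ≤ 1 ∧ (∀ y ∈ L, eval y q = 0) ∧ eval x q ≠ 0 := by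
  rcases (L : Set (σ → K)).eq_empty_or_nonempty with hL | ⟨p, hp⟩
  · exact ⟨1, by simp, fun y hy => (hL.subset hy).elim, by simp⟩
  have hdir : x - p ∉ L.direction := fun h =>
    hx ((AffineSubspace.vsub_right_mem_direction_iff_mem hp x).1 h)
  obtain ⟨φ, hφx, hφL⟩ := Submodule.exists_le_ker_of_notMem hdir
  obtain ⟨q, hq, hqφ⟩ := exists_totalDegree_le_one_eval_eq φ
  refine ⟨q - C (φ p), (totalDegree_sub_C_le _ _).trans hq, fun y hy => ?_, ?_⟩
  · simpa [hqφ] using hφL (AffineSubspace.vsub_mem_direction hy hp)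
  · simpa [hqφ] using hφx

theorem mem_affineSubspace_iff_forall_eval_eq_zero {σ K : Type*} [Finite σ] [Field K]
    {L : AffineSubspace K (σ → K)} {x : σ → K} :
    x ∈ L ↔ ∀ q ∈ {q : MvPolynomial σ K | q.totalDegree ≤ 1 ∧ ∀ y ∈ L, eval y q = 0},
      eval x q = 0 := by
  refine ⟨fun hx q hq => hq.2 x hx, fun h => by_contra fun hx => ?_⟩
  obtain ⟨q, hq, hqL, hqx⟩ := exists_totalDegree_le_one_eval_ne_zero_of_notMem hx
  exact hqx (h q ⟨hq, hqL⟩)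

theorem natCard_connectedComponents_variety_inter_closedBall_le {σ : Type*} [Fintype σ]
    {S : Set (MvPolynomial σ ℝ)} {d : ℕ} (hd : 2 ≤ d) (hS : ∀ q ∈ S, q.totalDegree ≤ d) {c : ℝ}
    (hc : 0 ≤ c) :
    Finite (ConnectedComponents
      ↥({x : EuclideanSpace ℝ σ | ∀ q ∈ S, eval x q = 0} ∩ closedBall 0 c)) ∧
    Nat.card (ConnectedComponents
      ↥({x : EuclideanSpace ℝ σ | ∀ q ∈ S, eval x q = 0} ∩ closedBall 0 c)) ≤
        (2 * d) ^ (Fintype.card σ + 1) := by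
  obtain ⟨T, hTS, hT⟩ := exists_finset_forall_eval_eq_zero_iff S
  have hcont : Continuous fun x : Option σ → ℝ => WithLp.toLp 2 (x ∘ some) := by fun_prop
  obtain ⟨hfin, hcard⟩ := natCard_connectedComponents_zeroLocus_le (by lia)
    (totalDegree_sphereLift_le hd (fun q hq => hS q (hTS hq)) c) (eval_sphereLift_nonneg T c)
    (isCompact_zeroLocus_sphereLift T c)
  have himage : (fun x : Option σ → ℝ => WithLp.toLp 2 (x ∘ some)) ''
      {x | eval x (sphereLift T c) = 0} =
      {x : EuclideanSpace ℝ σ | ∀ q ∈ S, eval x q = 0} ∩ closedBall 0 c := by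
    rw [image_zeroLocus_sphereLift T hc]
    simp only [hT]
  rw [← himage]
  rw [Fintype.card_option] at hcard
  exact (finite_and_natCard_connectedComponents_image_le hcont _).imp_right fun h => h.trans hcard

end Varieties

theorem variety_ball_inter_affine_components_general {σ ι : Type*} [Fintype σ]
    {f : ι → MvPolynomial σ ℝ} {d : ℕ} (hd : 2 ≤ d) (hf : ∀ i, (f i).totalDegree ≤ d) {c : ℝ}
    (hc : 0 ≤ c) (L : AffineSubspace ℝ (EuclideanSpace ℝ σ)) :
    Finite (ConnectedComponents
      ↥({x : EuclideanSpace ℝ σ | ∀ i, eval x (f i) = 0} ∩ closedBall 0 c ∩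
        (L : Set (EuclideanSpace ℝ σ)))) ∧
    Nat.card (ConnectedComponents
      ↥({x : EuclideanSpace ℝ σ | ∀ i, eval x (f i) = 0} ∩ closedBall 0 c ∩
        (L : Set (EuclideanSpace ℝ σ)))) ≤ (2 * d) ^ (Fintype.card σ + 1) := by
  let L' : AffineSubspace ℝ (σ → ℝ) :=
    L.comap (WithLp.linearEquiv 2 ℝ (σ → ℝ)).symm.toLinearMap.toAffineMap
  let I : Set (MvPolynomial σ ℝ) := {q | q.totalDegree ≤ 1 ∧ ∀ y ∈ L', eval y q = 0}
  have hdeg : ∀ q ∈ Set.range f ∪ I, q.totalDegree ≤ d := by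
    rintro q (⟨i, rfl⟩ | hq)
    exacts [hf i, hq.1.trans (by lia)]
  have hset : {x : EuclideanSpace ℝ σ | ∀ i, eval x (f i) = 0} ∩ closedBall 0 c ∩
      (L : Set (EuclideanSpace ℝ σ)) =
      {x : EuclideanSpace ℝ σ | ∀ q ∈ Set.range f ∪ I, eval x q = 0} ∩ closedBall 0 c := by
    ext x
    have hxL : x ∈ L ↔ ∀ q ∈ I, eval x q = 0 :=
      mem_affineSubspace_iff_forall_eval_eq_zero (L := L')
    simp only [Set.mem_inter_iff, SetLike.mem_coe, hxL, Set.mem_ofPred_eq, Set.mem_union, or_imp,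
      forall_and, Set.forall_mem_range]
    tauto
  rw [hset]
  exact natCard_connectedComponents_variety_inter_closedBall_le hd hdeg hc

/-- The intersection of a real algebraic variety (the common zero set of a finite
family of polynomials of total degree at most `d`, with `d ≥ 2`) with a closed
Euclidean ball of radius `c > 0` and any affine subspace has at most
`(2d)^(N+1)` connected components. -/
theorem variety_ball_inter_affine_components (N d k : ℕ)
    (hN : 1 ≤ N) (hd : 2 ≤ d) (c : ℝ) (hc : 0 < c)
    (f : Fin k → MvPolynomial (Fin N) ℝ) (hdeg : ∀ i, (f i).totalDegree ≤ d)
    (L : AffineSubspace ℝ (EuclideanSpace ℝ (Fin N)))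
    (hL : (L : Set (EuclideanSpace ℝ (Fin N))).Nonempty) :
    Finite (ConnectedComponents
      ↥({x : EuclideanSpace ℝ (Fin N) | ∀ i, MvPolynomial.eval x (f i) = 0}
        ∩ Metric.closedBall (0 : EuclideanSpace ℝ (Fin N)) c
        ∩ (L : Set (EuclideanSpace ℝ (Fin N))))) ∧
    Nat.card (ConnectedComponents
      ↥({x : EuclideanSpace ℝ (Fin N) | ∀ i, MvPolynomial.eval x (f i) = 0}
        ∩ Metric.closedBall (0 : EuclideanSpace ℝ (Fin N)) c
        ∩ (L : Set (EuclideanSpace ℝ (Fin N)))))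
      ≤ (2 * d) ^ (N + 1) := by
  simpa only [Fintype.card_fin] using
    variety_ball_inter_affine_components_general hd hdeg hc.le L
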